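/- Let (α, β) be an admissible and non-null pair. If there is no x ∈ (0,1) such that π_x(α) = π_x(β), then for every x ∈ (0,1) the restriction of π_x to Ω_{(α,β)} is strictly increasing: for all σ, ω ∈ Ω_{(α,β)} with σ ≺ ω, one has π_x(σ) < π_x(ω). -/

import Mathlib

/-!
The proof is a connectedness argument in the parameter `x ∈ (0,1)`.  Write
`F x ω = ∑ ω_k x^k`, so that `proj x ω = (1 - x) * F x ω`.  By shift invariance of the address
space, `F x` is strictly increasing on it as soon as `F x σ < F x ω` whenever `σ` starts with `0`
and `ω` starts with `1`; let `T` be the set of `x ∈ (0,1)` with this property.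

* `1/4 ∈ T`, by comparison with the geometric series.
* Since `F · α` and `F · β` never agree on `(0,1)`, the intermediate value theorem gives
  `F x α < F x β` for all `x ∈ (0,1)`.
* If `F x` is weakly increasing on the address space, then for `σ` starting with `0` and `ω`
  starting with `1` one has `σ ≼ α`, `β ≼ ω`, hence `F x ω - F x σ ≥ F x β - F x α > 0`
  (`gap_le`).  This uniform gap makes `T` open, because `F · ω` is continuous uniformly in `ω`
  (`abs_F_sub_le`), and it makes `T` relatively closed, because weak monotonicity passes to limits.

Hence `T = (0,1)`.
-/

open Filter Set

/-- The space of infinite binary strings. -/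
abbrev Omega := ℕ → Bool

/-- Numerical value of a bit. -/
def b2r (b : Bool) : ℝ := if b then 1 else 0

/-- The projection map `π_x(ω) = (1-x) ∑ ω_k x^k`. -/
noncomputable def proj (x : ℝ) (ω : Omega) : ℝ := (1 - x) * ∑' k : ℕ, b2r (ω k) * x ^ k

/-- The shift map. -/
def shift (ω : Omega) : Omega := fun n => ω (n + 1)

/-- Strict lexicographic order on binary strings. -/
def lexLt (σ ω : Omega) : Prop := ∃ k : ℕ, (∀ i < k, σ i = ω i) ∧ σ k = false ∧ ω k = true

/-- Lexicographic order on binary strings. -/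
def lexLe (σ ω : Omega) : Prop := σ = ω ∨ lexLt σ ω

/-- An admissible pair of binary strings. -/
def admissible (α β : Omega) : Prop :=
  α 0 = false ∧ α 1 = true ∧ β 0 = true ∧ β 1 = false ∧
  (∀ n : ℕ, ¬ (lexLt α (shift^[n] α) ∧ lexLe (shift^[n] α) β)) ∧
  (∀ n : ℕ, ¬ (lexLe α (shift^[n] β) ∧ lexLt (shift^[n] β) β))

/-- The address space `Ω_{(α,β,-)}`. -/
def addrMinus (α β : Omega) : Set Omega :=
  {ω | ∀ n : ℕ, ¬ (lexLt α (shift^[n] ω) ∧ lexLe (shift^[n] ω) β)}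

/-- The address space `Ω_{(α,β,+)}`. -/
def addrPlus (α β : Omega) : Set Omega :=
  {ω | ∀ n : ℕ, ¬ (lexLe α (shift^[n] ω) ∧ lexLt (shift^[n] ω) β)}

/-- The address space `Ω_{(α,β)}`. -/
def addr (α β : Omega) : Set Omega := addrMinus α β ∪ addrPlus α β

/-- The exponential growth rate `h(Γ) = limsup (1/n) ln |Γ_n|`, where `Γ_n` is the set of
length-`(n+1)` prefixes of members of `Γ`. -/
noncomputable def growthRate (Γ : Set Omega) : ℝ :=
  Filter.limsup
    (fun n : ℕ => Real.log ((fun ω : Omega => fun i : Fin (n + 1) => ω i.val) '' Γ).ncard / n)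
    Filter.atTop

/-- The uniform overlapping function `f_{(a,p,-)}`. -/
noncomputable def fMinus (a p : ℝ) : ℝ → ℝ := fun x => if x ≤ p then a * x else a * x + (1 - a)

/-- The uniform overlapping function `f_{(a,p,+)}`. -/
noncomputable def fPlus (a p : ℝ) : ℝ → ℝ := fun x => if x < p then a * x else a * x + (1 - a)

/-- The itinerary map `τ_{(a,p,-)}`: the `n`-th bit is `1` iff `f^n(x) ∈ I₁ = (p,1]`. -/
noncomputable def itinMinus (a p x : ℝ) : Omega := fun n => decide (p < (fMinus a p)^[n] x)

/-- The itinerary map `τ_{(a,p,+)}`: the `n`-th bit is `1` iff `f^n(x) ∈ I₁ = [p,1]`. -/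
noncomputable def itinPlus (a p x : ℝ) : Omega := fun n => decide (p ≤ (fPlus a p)^[n] x)

/-- The power series `∑ ω_k x^k`, i.e. `proj` without its factor `1 - x`. -/
noncomputable def F (x : ℝ) (ω : Omega) : ℝ := ∑' k : ℕ, b2r (ω k) * x ^ k

lemma b2r_nonneg (b : Bool) : 0 ≤ b2r b := by cases b <;> simp [b2r]

lemma b2r_le_one (b : Bool) : b2r b ≤ 1 := by cases b <;> simp [b2r]

lemma summable_F {x : ℝ} (hx : x ∈ Ioo (0 : ℝ) 1) (ω : Omega) :
    Summable (fun k : ℕ => b2r (ω k) * x ^ k) := by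
  refine Summable.of_nonneg_of_le (fun k => mul_nonneg (b2r_nonneg _) (pow_nonneg hx.1.le k))
    (fun k => ?_) (summable_geometric_of_lt_one hx.1.le hx.2)
  exact mul_le_of_le_one_left (pow_nonneg hx.1.le k) (b2r_le_one _)

lemma shift_iterate (k : ℕ) (ω : Omega) (n : ℕ) : (shift^[k] ω) n = ω (n + k) := by
  induction k generalizing ω with
  | zero => rfl
  | succ k ih =>
    rw [Function.iterate_succ_apply, ih]
    simp only [shift]
    congr 1

lemma shift_iterate_mem {α β ω : Omega} (hω : ω ∈ addr α β) (k : ℕ) :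
    shift^[k] ω ∈ addr α β := by
  rcases hω with hω | hω
  · left
    intro n
    rw [← Function.iterate_add_apply]
    exact hω (n + k)
  · right
    intro n
    rw [← Function.iterate_add_apply]
    exact hω (n + k)

lemma F_split {x : ℝ} (hx : x ∈ Ioo (0 : ℝ) 1) (ω : Omega) (k : ℕ) :
    F x ω = ∑ i ∈ Finset.range k, b2r (ω i) * x ^ i + x ^ k * F x (shift^[k] ω) := by
  unfold F
  rw [← (summable_F hx ω).sum_add_tsum_nat_add k, ← tsum_mul_left]
  congr 1
  refine tsum_congr fun i => ?_
  rw [shift_iterate, pow_add]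
  ring

lemma F_sub_of_prefix {x : ℝ} (hx : x ∈ Ioo (0 : ℝ) 1) {σ ω : Omega} {k : ℕ}
    (hk : ∀ i < k, σ i = ω i) :
    F x ω - F x σ = x ^ k * (F x (shift^[k] ω) - F x (shift^[k] σ)) := by
  have e : ∑ i ∈ Finset.range k, b2r (σ i) * x ^ i = ∑ i ∈ Finset.range k, b2r (ω i) * x ^ i :=
    Finset.sum_congr rfl fun i hi => by rw [hk i (Finset.mem_range.1 hi)]
  rw [F_split hx ω k, F_split hx σ k, e]
  ring

/-- The modulus of continuity of `F · ω` does not depend on `ω`: since `y ↦ y ^ k` is monotone,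
the variation of `F · ω` is at most that of the full geometric series. -/
lemma abs_F_sub_le {x y : ℝ} (hx : x ∈ Ioo (0 : ℝ) 1) (hy : y ∈ Ioo (0 : ℝ) 1) (ω : Omega) :
    |F y ω - F x ω| ≤ |(1 - y)⁻¹ - (1 - x)⁻¹| := by
  wlog hxy : x ≤ y generalizing x y
  · rw [abs_sub_comm, abs_sub_comm (1 - y)⁻¹]
    exact this hy hx (le_of_not_ge hxy)
  have hp : ∀ k : ℕ, x ^ k ≤ y ^ k := fun k => pow_le_pow_left₀ hx.1.le hxy k
  have h0 : F x ω ≤ F y ω :=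
    (summable_F hx ω).tsum_le_tsum
      (fun k => mul_le_mul_of_nonneg_left (hp k) (b2r_nonneg _)) (summable_F hy ω)
  have gx := summable_geometric_of_lt_one hx.1.le hx.2
  have gy := summable_geometric_of_lt_one hy.1.le hy.2
  have h1 : F y ω - F x ω ≤ (1 - y)⁻¹ - (1 - x)⁻¹ := by
    rw [← tsum_geometric_of_lt_one hx.1.le hx.2, ← tsum_geometric_of_lt_one hy.1.le hy.2]
    unfold F
    rw [← (summable_F hy ω).tsum_sub (summable_F hx ω), ← gy.tsum_sub gx]
    refine ((summable_F hy ω).sub (summable_F hx ω)).tsum_le_tsum (fun k => ?_) (gy.sub gx)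
    rw [← mul_sub]
    exact mul_le_of_le_one_left (sub_nonneg.2 (hp k)) (b2r_le_one _)
  rw [abs_of_nonneg (sub_nonneg.2 h0)]
  exact h1.trans (le_abs_self _)

lemma tendsto_modulus {x : ℝ} (hx : x ∈ Ioo (0 : ℝ) 1) :
    Tendsto (fun y : ℝ => |(1 - y)⁻¹ - (1 - x)⁻¹|) (nhds x) (nhds 0) := by
  have hne : (1 : ℝ) - x ≠ 0 := by linarith [hx.2]
  have : ContinuousAt (fun y : ℝ => |(1 - y)⁻¹ - (1 - x)⁻¹|) x := by
    fun_prop (disch := assumption)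
  simpa [ContinuousAt] using this

lemma continuousAt_F {x : ℝ} (hx : x ∈ Ioo (0 : ℝ) 1) (ω : Omega) :
    ContinuousAt (fun y => F y ω) x := by
  rw [ContinuousAt, tendsto_iff_dist_tendsto_zero]
  refine squeeze_zero' (Eventually.of_forall fun _ => dist_nonneg) ?_ (tendsto_modulus hx)
  filter_upwards [isOpen_Ioo.mem_nhds hx] with y hy
  exact abs_F_sub_le hx hy ω

lemma F_quarter_lt {σ ω : Omega} (hσ : σ 0 = false) (hω : ω 0 = true) :
    F (1 / 4) σ < F (1 / 4) ω := by
  have hx : (1 / 4 : ℝ) ∈ Ioo (0 : ℝ) 1 := by constructor <;> norm_num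
  have hub : F (1 / 4) (shift^[1] σ) ≤ 4 / 3 := by
    have := (summable_F hx (shift^[1] σ)).tsum_le_tsum
      (fun k => mul_le_of_le_one_left (pow_nonneg hx.1.le k) (b2r_le_one _))
      (summable_geometric_of_lt_one hx.1.le hx.2)
    rw [tsum_geometric_of_lt_one hx.1.le hx.2] at this
    unfold F
    norm_num at this ⊢
    exact this
  have hlb : 0 ≤ F (1 / 4) (shift^[1] ω) :=
    tsum_nonneg fun k => mul_nonneg (b2r_nonneg _) (pow_nonneg hx.1.le k)
  rw [F_split hx σ 1, F_split hx ω 1]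
  simp only [Finset.range_one, Finset.sum_singleton, hσ, hω, b2r, pow_zero, pow_one]
  norm_num at hub hlb ⊢
  linarith

/-- `α` bounds the addresses starting with `0` from above. -/
lemma lexLe_alpha {α β σ : Omega} (hb : β 0 = true) (hσ : σ ∈ addr α β)
    (h0 : σ 0 = false) : lexLe σ α := by
  have hlt : lexLt σ β := ⟨0, by simp, h0, hb⟩
  by_contra hn
  have hlt' : lexLt α σ := by
    have hne : σ ≠ α := fun e => hn (Or.inl e)
    have hex : ∃ k, σ k ≠ α k := Function.ne_iff.1 hne
    classical
    have hmin : ∀ i < Nat.find hex, σ i = α i := fun i hi => not_not.1 (Nat.find_min hex hi)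
    have hk := Nat.find_spec hex
    cases h1 : σ (Nat.find hex) <;> cases h2 : α (Nat.find hex)
    · simp [h1, h2] at hk
    · exact absurd (Or.inr ⟨_, hmin, h1, h2⟩) hn
    · exact ⟨_, fun i hi => (hmin i hi).symm, h2, h1⟩
    · simp [h1, h2] at hk
  rcases hσ with hσ | hσ
  · exact hσ 0 ⟨hlt', Or.inr hlt⟩
  · exact hσ 0 ⟨Or.inr hlt', hlt⟩

/-- `β` bounds the addresses starting with `1` from below. -/
lemma beta_lexLe {α β ω : Omega} (ha : α 0 = false) (hω : ω ∈ addr α β)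
    (h0 : ω 0 = true) : lexLe β ω := by
  have hlt : lexLt α ω := ⟨0, by simp, ha, h0⟩
  by_contra hn
  have hlt' : lexLt ω β := by
    have hne : β ≠ ω := fun e => hn (Or.inl e)
    have hex : ∃ k, β k ≠ ω k := Function.ne_iff.1 hne
    classical
    have hmin : ∀ i < Nat.find hex, β i = ω i := fun i hi => not_not.1 (Nat.find_min hex hi)
    have hk := Nat.find_spec hex
    cases h1 : β (Nat.find hex) <;> cases h2 : ω (Nat.find hex)
    · simp [h1, h2] at hk
    · exact absurd (Or.inr ⟨_, hmin, h1, h2⟩) hn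
    · exact ⟨_, fun i hi => (hmin i hi).symm, h2, h1⟩
    · simp [h1, h2] at hk
  rcases hω with hω | hω
  · exact hω 0 ⟨hlt, Or.inr hlt'⟩
  · exact hω 0 ⟨Or.inr hlt, hlt'⟩

/-- Weak monotonicity across the first symbol self-improves: the difference of two values is at
least the difference of the values at the critical pair. -/
lemma gap_le {α β : Omega} (hadm : admissible α β) {x : ℝ} (hx : x ∈ Ioo (0 : ℝ) 1)
    (hw : ∀ σ ∈ addr α β, ∀ ω ∈ addr α β, σ 0 = false → ω 0 = true → F x σ ≤ F x ω)
    {σ ω : Omega} (hσ : σ ∈ addr α β) (hω : ω ∈ addr α β) (h0 : σ 0 = false) (h1 : ω 0 = true) :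
    F x β - F x α ≤ F x ω - F x σ := by
  obtain ⟨ha, -, hb, -, hα, hβ⟩ := hadm
  have hαm : α ∈ addr α β := Or.inl hα
  have hβm : β ∈ addr α β := Or.inr hβ
  have mono : ∀ σ ∈ addr α β, ∀ ω ∈ addr α β, lexLe σ ω → F x σ ≤ F x ω := by
    rintro σ hσ ω hω (rfl | ⟨k, hk, h0, h1⟩)
    · exact le_rfl
    · have := hw _ (shift_iterate_mem hσ k) _ (shift_iterate_mem hω k)
        (by simpa [shift_iterate] using h0) (by simpa [shift_iterate] using h1)
      have := mul_nonneg (pow_nonneg hx.1.le k) (sub_nonneg.2 this)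
      rw [← F_sub_of_prefix hx hk] at this
      exact sub_nonneg.1 this
  have e1 := mono σ hσ α hαm (lexLe_alpha hb hσ h0)
  have e2 := mono β hβm ω hω (beta_lexLe ha hω h1)
  linarith

lemma F_alpha_lt_F_beta {α β : Omega} (hadm : admissible α β)
    (h : ¬ ∃ x ∈ Ioo (0 : ℝ) 1, proj x α = proj x β) {x : ℝ} (hx : x ∈ Ioo (0 : ℝ) 1) :
    F x α < F x β := by
  by_contra! hle
  have hq : (1 / 4 : ℝ) ∈ Ioo (0 : ℝ) 1 := by constructor <;> norm_num
  obtain ⟨y, hy, hyeq⟩ := isPreconnected_Ioo.intermediate_value₂ hq hx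
    (f := fun y => F y α) (g := fun y => F y β)
    (fun y hy => (continuousAt_F hy α).continuousWithinAt)
    (fun y hy => (continuousAt_F hy β).continuousWithinAt)
    (F_quarter_lt hadm.1 hadm.2.2.1).le hle
  exact h ⟨y, hy, congrArg (fun t => (1 - y) * t) hyeq⟩

lemma F_lt_of_first {α β : Omega} (hadm : admissible α β)
    (h : ¬ ∃ x ∈ Ioo (0 : ℝ) 1, proj x α = proj x β) {x : ℝ} (hx : x ∈ Ioo (0 : ℝ) 1)
    {σ ω : Omega} (hσ : σ ∈ addr α β) (hω : ω ∈ addr α β) (h0 : σ 0 = false) (h1 : ω 0 = true) :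
    F x σ < F x ω := by
  let T : Set ℝ := {x | x ∈ Ioo (0 : ℝ) 1 ∧
    ∀ σ ∈ addr α β, ∀ ω ∈ addr α β, σ 0 = false → ω 0 = true → F x σ < F x ω}
  suffices hs : Ioo (0 : ℝ) 1 ⊆ T from (hs hx).2 σ hσ ω hω h0 h1
  refine isPreconnected_Ioo.subset_of_closure_inter_subset ?_ ?_ ?_
  · rw [isOpen_iff_mem_nhds]
    rintro y ⟨hy, hyT⟩
    have hpos := sub_pos.2 (F_alpha_lt_F_beta hadm h hy)
    filter_upwards [isOpen_Ioo.mem_nhds hy,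
      (tendsto_modulus hy).eventually (gt_mem_nhds (half_pos hpos))] with z hz hzs
    refine ⟨hz, fun σ hσ ω hω h0 h1 => ?_⟩
    have hg := gap_le hadm hy (fun σ hσ ω hω h0 h1 => (hyT σ hσ ω hω h0 h1).le) hσ hω h0 h1
    have e1 := abs_le.1 (abs_F_sub_le hy hz σ)
    have e2 := abs_le.1 (abs_F_sub_le hy hz ω)
    linarith [e1.2, e2.1]
  · have hq : (1 / 4 : ℝ) ∈ Ioo (0 : ℝ) 1 := by constructor <;> norm_num
    exact ⟨1 / 4, hq, hq, fun σ _ ω _ h0 h1 => F_quarter_lt h0 h1⟩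
  · rintro y ⟨hyc, hy⟩
    refine ⟨hy, fun σ hσ ω hω h0 h1 => ?_⟩
    have hw : ∀ σ ∈ addr α β, ∀ ω ∈ addr α β, σ 0 = false → ω 0 = true → F y σ ≤ F y ω := by
      intro σ hσ ω hω h0 h1
      by_contra! hlt
      have hev := (continuousAt_F hy ω).eventually_lt (continuousAt_F hy σ) hlt
      obtain ⟨z, hzT, hz⟩ := ((mem_closure_iff_frequently.1 hyc).and_eventually hev).exists
      exact lt_asymm hz (hzT.2 σ hσ ω hω h0 h1)
    have hg := gap_le hadm hy hw hσ hω h0 h1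
    linarith [F_alpha_lt_F_beta hadm h hy]

/-- If (α,β) is admissible and non-null and no x ∈ (0,1) satisfies π_x α = π_x β, then for
every x ∈ (0,1) the projection π_x is strictly increasing on Ω_{(α,β)}. -/
theorem stmt11 (α β : Omega) (hadm : admissible α β) (hnn : 0 < growthRate (addr α β))
    (h : ¬ ∃ x ∈ Set.Ioo (0 : ℝ) 1, proj x α = proj x β) :
    ∀ x ∈ Set.Ioo (0 : ℝ) 1, ∀ σ ∈ addr α β, ∀ ω ∈ addr α β,
      lexLt σ ω → proj x σ < proj x ω := by
  rintro x hx σ hσ ω hω ⟨k, hk, h0, h1⟩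
  have hlt := F_lt_of_first hadm h hx (shift_iterate_mem hσ k) (shift_iterate_mem hω k)
    (by simpa [shift_iterate] using h0) (by simpa [shift_iterate] using h1)
  have hpos := mul_pos (pow_pos hx.1 k) (sub_pos.2 hlt)
  rw [← F_sub_of_prefix hx hk] at hpos
  exact mul_lt_mul_of_pos_left (sub_pos.1 hpos) (sub_pos.2 hx.2)
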